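/- For every real z with 0 < z < 1, the Barnes G-function satisfies the reflexion formula log( G(1+z)/G(1−z) ) = −z·log( sin(πz)/π ) − Cl₂(2πz)/(2π), where Cl₂ is the Clausen function. -/

import Mathlib

open Real MeasureTheory Filter

/-- Hurwitz zeta function ζ(s, a) for real a > 0, via analytic continuation. -/
noncomputable def hurwitzZetaReal (s : ℂ) (a : ℝ) : ℂ :=
  HurwitzZeta.hurwitzZeta (a : UnitAddCircle) s -
    ∑ k ∈ Finset.range (⌈a⌉₊ - 1), ((a - (⌈a⌉₊ - 1) + k : ℝ) : ℂ) ^ (-s)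

/-- ζ'(-1, a): derivative of the Hurwitz zeta function w.r.t. s at s = -1. -/
noncomputable def hurwitzZetaDerivNegOne (a : ℝ) : ℂ :=
  deriv (fun s => hurwitzZetaReal s a) (-1)

/-- Logarithm of the Glaisher–Kinkelin constant: log A = 1/12 - ζ'(-1). -/
noncomputable def logA : ℂ := 1 / 12 - deriv riemannZeta (-1)

/-- log G(z+1) for z > 0, via log G(z+1) = z log Γ(z) + ζ'(-1) - ζ'(-1, z). -/
noncomputable def logBarnesG1p (z : ℝ) : ℂ :=
  z * Real.log (Real.Gamma z) + deriv riemannZeta (-1) - hurwitzZetaDerivNegOne z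

/-- log G(x) for x > 0, via the recurrence G(z+1) = Γ(z) G(z) on (0, 1]. -/
noncomputable def logBarnesG (x : ℝ) : ℂ :=
  if x ≤ 1 then logBarnesG1p x - Real.log (Real.Gamma x) else logBarnesG1p (x - 1)

/-- The Barnes G-function (for positive real argument). -/
noncomputable def barnesG (x : ℝ) : ℂ := Complex.exp (logBarnesG x)

/-- The digamma function ψ = (log Γ)'. -/
noncomputable def digamma (x : ℝ) : ℝ := deriv (fun t => Real.log (Real.Gamma t)) x

/-- The trigamma function ψ⁽¹⁾ = (log Γ)''. -/
noncomputable def trigamma (x : ℝ) : ℝ :=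
  deriv (deriv (fun t => Real.log (Real.Gamma t))) x

/-- The Clausen function Cl₂(x) = ∑_{k ≥ 1} sin(k x) / k². -/
noncomputable def clausen2 (x : ℝ) : ℝ := ∑' k : ℕ, Real.sin ((k + 1) * x) / (k + 1) ^ 2

/-- Catalan's constant. -/
noncomputable def catalanConst : ℝ := ∑' k : ℕ, (-1 : ℝ) ^ k / (2 * (k : ℝ) + 1) ^ 2

/-!
Write `ζ(s, z) = E(s) + O(s)` with `E` even and `O` odd under `z ↦ 1 - z`. By the recurrence and the
defining formula, `log G(1 + z) - log G(1 - z) = z log (Γ(z) Γ(1 - z)) - 2 O'(-1)`, and Euler's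
reflection formula evaluates the first term. The functional equation expresses `O(1 - s)` as
`sin (π s / 2)` times a function holomorphic at `s = 2`; since the sine vanishes there, only its own
derivative contributes to `O'(-1)`, which comes out as `Cl₂(2πz) / (4π)`.
-/

open HurwitzZeta Topology

lemma hasDerivAt_hurwitzZetaOdd_one_sub_of_sin_eq_zero (a : UnitAddCircle) {s : ℂ}
    (hs : 0 < s.re) (hsin : Complex.sin (π * s / 2) = 0) :
    HasDerivAt (hurwitzZetaOdd a)
      (-(π * (2 * π) ^ (-s) * Complex.Gamma s * Complex.cos (π * s / 2) * sinZeta a s))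
      (1 - s) := by
  have ne_neg_nat {t : ℂ} (ht : 0 < t.re) (m : ℕ) : t ≠ -m := by
    rintro rfl
    simp [m.cast_nonneg.not_gt] at ht
  set g : ℂ → ℂ := fun t ↦ 2 * (2 * π) ^ (-t) * Complex.Gamma t * sinZeta a t with hg_def
  have hg : DifferentiableAt ℂ g s := by
    refine .fun_mul (.fun_mul ?_ ?_) (differentiableAt_sinZeta a _)
    · exact (differentiableAt_id.neg.const_cpow (.inl (by simp [Real.pi_ne_zero]))).const_mul _
    · exact Complex.differentiableAt_Gamma _ (ne_neg_nat hs)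
  have hsin_deriv : HasDerivAt (fun t : ℂ ↦ Complex.sin (π * t / 2))
      (Complex.cos (π * s / 2) * (π / 2)) s := by
    simpa using (((hasDerivAt_id s).const_mul (π : ℂ)).div_const 2).csin
  have hprod : HasDerivAt (fun t ↦ g t * Complex.sin (π * t / 2))
      (g s * (Complex.cos (π * s / 2) * (π / 2))) (1 - (1 - s)) := by
    simpa only [sub_sub_cancel, hsin, mul_zero, zero_add] using hg.hasDerivAt.fun_mul hsin_deriv
  have hfe : hurwitzZetaOdd a =ᶠ[𝓝 (1 - s)]
      fun t ↦ g (1 - t) * Complex.sin (π * (1 - t) / 2) := by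
    have hre : ∀ᶠ t : ℂ in 𝓝 (1 - s), 0 < (1 - t).re :=
      (isOpen_lt continuous_const (by fun_prop)).mem_nhds (by simpa using hs)
    filter_upwards [hre] with t ht
    rw [← sub_sub_cancel 1 t, hurwitzZetaOdd_one_sub a (ne_neg_nat ht), sub_sub_cancel]
    ring
  refine ((hprod.comp_const_sub 1 _).congr_of_eventuallyEq hfe).congr_deriv ?_
  rw [hg_def]
  ring

lemma hasDerivAt_hurwitzZetaOdd_neg_one (a : UnitAddCircle) :
    HasDerivAt (hurwitzZetaOdd a) (sinZeta a 2 / (4 * π)) (-1) := by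
  have hpow : (2 * π : ℂ) ^ (-2 : ℂ) = ((2 * π : ℂ) ^ 2)⁻¹ := by
    rw [Complex.cpow_neg, Complex.cpow_ofNat]
  have hGamma : Complex.Gamma 2 = 1 := by simp
  have h := hasDerivAt_hurwitzZetaOdd_one_sub_of_sin_eq_zero a (s := 2) (by simp) (by simp)
  rw [mul_div_cancel_right₀ _ two_ne_zero, Complex.cos_pi, hpow, hGamma,
    show (1 - 2 : ℂ) = -1 by norm_num] at h
  refine h.congr_deriv ?_
  field_simp
  ring

lemma deriv_hurwitzZeta_sub_deriv_hurwitzZeta_neg (a : UnitAddCircle) {s : ℂ} (hs : s ≠ 1) :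
    deriv (hurwitzZeta a) s - deriv (hurwitzZeta (-a)) s = 2 * deriv (hurwitzZetaOdd a) s := by
  rw [← deriv_fun_sub (differentiableAt_hurwitzZeta a hs) (differentiableAt_hurwitzZeta (-a) hs),
    ← deriv_const_mul_field]
  congr with t
  rw [hurwitzZetaOdd_eq]
  ring

lemma hurwitzZetaReal_eq_hurwitzZeta {a : ℝ} (ha0 : 0 < a) (ha1 : a ≤ 1) (s : ℂ) :
    hurwitzZetaReal s a = hurwitzZeta a s := by
  have hceil : ⌈a⌉₊ = 1 := by
    rw [Nat.ceil_eq_iff one_ne_zero]; simpa using ⟨ha0, ha1⟩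
  simp [hurwitzZetaReal, hceil]

lemma hurwitzZetaDerivNegOne_eq_deriv_hurwitzZeta {a : ℝ} (ha0 : 0 < a) (ha1 : a ≤ 1) :
    hurwitzZetaDerivNegOne a = deriv (hurwitzZeta a) (-1) := by
  simp only [hurwitzZetaDerivNegOne, hurwitzZetaReal_eq_hurwitzZeta ha0 ha1]

lemma sinZeta_two_eq_clausen2 (x : ℝ) : sinZeta x 2 = clausen2 (2 * π * x) := by
  have h := hasSum_nat_sinZeta x (s := 2) (by simp)
  rw [← h.tsum_eq, h.summable.tsum_eq_zero_add, clausen2, Complex.ofReal_tsum]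
  simp only [Nat.cast_zero, mul_zero, Real.sin_zero, Complex.ofReal_zero, zero_div, zero_add]
  refine tsum_congr fun k ↦ ?_
  rw [Complex.cpow_ofNat, mul_comm (k + 1 : ℝ)]
  push_cast
  rfl

lemma hurwitzZetaDerivNegOne_sub_one_sub {z : ℝ} (hz0 : 0 < z) (hz1 : z < 1) :
    hurwitzZetaDerivNegOne z - hurwitzZetaDerivNegOne (1 - z) =
      clausen2 (2 * π * z) / (2 * π) := by
  have hneg : ((1 - z : ℝ) : UnitAddCircle) = -z := by
    rw [AddCircle.coe_sub, AddCircle.coe_period, zero_sub]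
  rw [hurwitzZetaDerivNegOne_eq_deriv_hurwitzZeta hz0 hz1.le,
    hurwitzZetaDerivNegOne_eq_deriv_hurwitzZeta (by linarith) (by linarith), hneg,
    deriv_hurwitzZeta_sub_deriv_hurwitzZeta_neg _ (by norm_num),
    (hasDerivAt_hurwitzZetaOdd_neg_one _).deriv, sinZeta_two_eq_clausen2]
  ring

lemma log_Gamma_add_log_Gamma_one_sub {x : ℝ} (hx : Real.sin (π * x) ≠ 0) :
    Real.log (Real.Gamma x) + Real.log (Real.Gamma (1 - x)) =
      -Real.log (Real.sin (π * x) / π) := by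
  have hprod : Real.Gamma x * Real.Gamma (1 - x) ≠ 0 := by
    rw [Real.Gamma_mul_Gamma_one_sub]
    exact div_ne_zero Real.pi_ne_zero hx
  rw [← Real.log_mul (left_ne_zero_of_mul hprod) (right_ne_zero_of_mul hprod),
    Real.Gamma_mul_Gamma_one_sub, ← Real.log_inv, inv_div]

lemma logBarnesG_one_add_sub_logBarnesG_one_sub {z : ℝ} (hz : 0 < z) :
    logBarnesG (1 + z) - logBarnesG (1 - z) =
      z * (Real.log (Real.Gamma z) + Real.log (Real.Gamma (1 - z)) : ℝ) -
        (hurwitzZetaDerivNegOne z - hurwitzZetaDerivNegOne (1 - z)) := by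
  rw [logBarnesG, logBarnesG, if_neg (by linarith), if_pos (by linarith), add_sub_cancel_left,
    logBarnesG1p, logBarnesG1p]
  push_cast
  ring

/-- Reflexion formula for the Barnes G-function, 0 < z < 1. -/
theorem logBarnesG_reflection (z : ℝ) (hz0 : 0 < z) (hz1 : z < 1) :
    logBarnesG (1 + z) - logBarnesG (1 - z) =
      ((-z * Real.log (Real.sin (π * z) / π) - clausen2 (2 * π * z) / (2 * π) : ℝ) : ℂ) := by
  have hsin : 0 < Real.sin (π * z) :=
    Real.sin_pos_of_pos_of_lt_pi (by positivity) (mul_lt_of_lt_one_right Real.pi_pos hz1)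
  rw [logBarnesG_one_add_sub_logBarnesG_one_sub hz0, log_Gamma_add_log_Gamma_one_sub hsin.ne',
    hurwitzZetaDerivNegOne_sub_one_sub hz0 hz1]
  push_cast
  ring
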